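/- (Positivity of the detection margin) For every integer M ≥ 1 and every real τ with 0 < τ ≤ 1/√(6M), one has (2/3)·√((1−τ²)/τ²) > √( (5/4)M − 7/4 + 1/(2M) ) + √(M/12); that is, the quantity F = (2/3)·√((1−τ²)/τ²) − ( √( (5/4)M − 7/4 + 1/(2M) ) + √(M/12) ) is strictly positive. -/

import Mathlib

/-!
The bound on `τ` gives `(1 - τ²)/τ² ≥ 6M - 1`, so the square of the right-hand side is at least
`8M/3 - 4/9`. By `(a + b)² ≤ 2 (a² + b²)` the square of the left-hand side is at most
`8M/3 - 7/2 + 1/M ≤ 8M/3 - 5/2`.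
-/

theorem sqrt_add_sqrt_le_sqrt_two_mul_add {a b : ℝ} (ha : 0 ≤ a) (hb : 0 ≤ b) :
    √a + √b ≤ √(2 * (a + b)) := by
  refine Real.le_sqrt_of_sq_le ?_
  calc (√a + √b) ^ 2 ≤ 2 * (√a ^ 2 + √b ^ 2) := add_sq_le
    _ = 2 * (a + b) := by rw [Real.sq_sqrt ha, Real.sq_sqrt hb]

theorem sub_one_le_one_sub_sq_div_sq {c τ : ℝ} (hτ0 : 0 < τ) (hτ : τ ≤ 1 / √c) :
    c - 1 ≤ (1 - τ ^ 2) / τ ^ 2 := by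
  have sqrt_le : √c ≤ 1 / τ := by
    rw [le_div_iff₀' hτ0]
    exact mul_le_of_le_div₀ zero_le_one (Real.sqrt_nonneg c) hτ
  have le_sq : c ≤ (1 / τ) ^ 2 := (Real.sqrt_le_iff.mp sqrt_le).2
  calc c - 1 ≤ (1 / τ) ^ 2 - 1 := sub_le_sub_right le_sq 1
    _ = (1 - τ ^ 2) / τ ^ 2 := by field_simp

theorem detection_radicand_eq {x : ℝ} (hx : x ≠ 0) :
    5 / 4 * x - 7 / 4 + 1 / (2 * x) = (5 * x - 2) * (x - 1) / (4 * x) := by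
  field_simp
  ring

theorem detection_radicand_nonneg {x : ℝ} (hx : 1 ≤ x) :
    0 ≤ 5 / 4 * x - 7 / 4 + 1 / (2 * x) := by
  rw [detection_radicand_eq (by positivity)]
  exact div_nonneg (mul_nonneg (by linarith) (by linarith)) (by positivity)

theorem sqrt_detection_radicand_add_sqrt_lt {x : ℝ} (hx : 1 ≤ x) :
    √(5 / 4 * x - 7 / 4 + 1 / (2 * x)) + √(x / 12) < 2 / 3 * √(6 * x - 1) := by
  have hpos : 0 < 6 * x - 1 := by linarith
  have hinv : 1 / (2 * x) ≤ 1 / 2 := one_div_le_one_div_of_le two_pos (by linarith)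
  calc √(5 / 4 * x - 7 / 4 + 1 / (2 * x)) + √(x / 12)
      ≤ √(2 * (5 / 4 * x - 7 / 4 + 1 / (2 * x) + x / 12)) :=
        sqrt_add_sqrt_le_sqrt_two_mul_add (detection_radicand_nonneg hx) (by positivity)
    _ < 2 / 3 * √(6 * x - 1) := by
        rw [Real.sqrt_lt' (by positivity), mul_pow, Real.sq_sqrt hpos.le]
        linarith

theorem detection_margin_positive_general {x τ : ℝ} (hx : 1 ≤ x) (hτ0 : 0 < τ)
    (hτ : τ ≤ 1 / √(6 * x)) :
    √(5 / 4 * x - 7 / 4 + 1 / (2 * x)) + √(x / 12) < 2 / 3 * √((1 - τ ^ 2) / τ ^ 2) :=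
  calc √(5 / 4 * x - 7 / 4 + 1 / (2 * x)) + √(x / 12)
      < 2 / 3 * √(6 * x - 1) := sqrt_detection_radicand_add_sqrt_lt hx
    _ ≤ 2 / 3 * √((1 - τ ^ 2) / τ ^ 2) := by
        gcongr
        exact sub_one_le_one_sub_sq_div_sq hτ0 hτ

/-- **Positivity of the detection margin.**  For every integer `M ≥ 1` and every real
`τ` with `0 < τ ≤ 1/√(6M)`, one has
`(2/3)√((1-τ²)/τ²) > √((5/4)M - 7/4 + 1/(2M)) + √(M/12)`; i.e. the detection margin
`F = (2/3)√((1-τ²)/τ²) - (√((5/4)M - 7/4 + 1/(2M)) + √(M/12))` is strictly positive. -/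
theorem detection_margin_positive
    (M : ℕ) (hM : 1 ≤ M) (τ : ℝ) (hτ0 : 0 < τ)
    (hτ1 : τ ≤ 1 / Real.sqrt (6 * (M : ℝ))) :
    Real.sqrt ((5 / 4) * (M : ℝ) - 7 / 4 + 1 / (2 * (M : ℝ))) +
        Real.sqrt ((M : ℝ) / 12) <
      (2 / 3) * Real.sqrt ((1 - τ ^ 2) / τ ^ 2) :=
  detection_margin_positive_general (Nat.one_le_cast.mpr hM) hτ0 hτ1
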